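/- arXiv:2011.01702 — 4 statements merged into one kernel-verified Lean document; each statement's English description precedes it below -/
import Mathlib

section
/- Let T be a triangulated category with a semiorthogonal decomposition T = ⟨T₁, T₂⟩, and let T₁^{≤0} and T₂^{≤0} be t-structures on T₁ and T₂ respectively that are compatible in T. Then the full subcategory T^{≤0} := T₂^{≤0} * (T₁^{≤0}[1]) is a t-structure on T. -/
open CategoryTheory Category Limits Pretriangulated

namespace Paper

universe v u

variable {C : Type u} [Category.{v} C] [HasZeroObject C] [Preadditive C]
  [HasShift C ℤ] [∀ n : ℤ, (shiftFunctor C n).Additive] [Pretriangulated C]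

/-- The right orthogonal of a set of objects: objects receiving only zero maps. -/
def rOrth (S : Set C) : Set C := {Y | ∀ X ∈ S, ∀ f : X ⟶ Y, f = 0}

/-- Shift of a set of objects by `n` (closed under isomorphism). -/
def shSet (S : Set C) (n : ℤ) : Set C := {Y | ∃ X ∈ S, Nonempty (Y ≅ X⟦n⟧)}

/-- The `*` operation on sets of objects of a triangulated category. -/
def star (X Y : Set C) : Set C :=
  {Z | ∃ (A : C) (_ : A ∈ X) (B : C) (_ : B ∈ Y) (f : A ⟶ Z) (g : Z ⟶ B)
    (h : B ⟶ A⟦(1 : ℤ)⟧), Triangle.mk f g h ∈ distTriang C}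

/-- A strictly full triangulated subcategory, encoded as a set of objects. -/
structure IsTriangulatedSub (S : Set C) : Prop where
  zero : ∀ X : C, IsZero X → X ∈ S
  isoClosed : ∀ {X Y : C}, (X ≅ Y) → X ∈ S → Y ∈ S
  shift : ∀ (n : ℤ), ∀ X ∈ S, X⟦n⟧ ∈ S
  ext₂ : ∀ T ∈ distTriang C, T.obj₁ ∈ S → T.obj₃ ∈ S → T.obj₂ ∈ S

/-- A t-structure on the full triangulated subcategory `S ⊆ C`, given by its aisle
`le` (playing the role of `S^{≤ 0}`).  The coaisle `S^{≥ 1}` is `S ∩ rOrth le`. -/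
structure IsTStructureOn (S le : Set C) : Prop where
  subset : le ⊆ S
  isoClosed : ∀ {X Y : C}, (X ≅ Y) → X ∈ le → Y ∈ le
  shift : ∀ X ∈ le, X⟦(1 : ℤ)⟧ ∈ le
  exists_triangle : ∀ E ∈ S, ∃ (A B : C) (_ : A ∈ le) (_ : B ∈ S ∩ rOrth le)
    (f : A ⟶ E) (g : E ⟶ B) (h : B ⟶ A⟦(1 : ℤ)⟧), Triangle.mk f g h ∈ distTriang C

/-- `S^{≤ i} := S^{≤ 0}[-i]`. -/
def leN (le : Set C) (i : ℤ) : Set C := shSet le (-i)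

/-- `S^{≥ j} := S^{≥ 1}[-j+1]`. -/
def geN (S le : Set C) (j : ℤ) : Set C := shSet (S ∩ rOrth le) (1 - j)

/-- The heart `S^{≤ 0} ∩ S^{≥ 0}` of a t-structure on `S`. -/
def heartOn (S le : Set C) : Set C := leN le 0 ∩ geN S le 0

/-- Boundedness of a t-structure on `S`. -/
def IsBoundedOn (S le : Set C) : Prop := ∀ E ∈ S, ∃ i j : ℤ, E ∈ leN le i ∧ E ∈ geN S le j

/-- Non-degeneracy of a t-structure on `S`. -/
def IsNonDegenerateOn (S le : Set C) : Prop :=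
  (∀ E : C, (∀ i : ℤ, E ∈ leN le i) → IsZero E) ∧
  (∀ E : C, (∀ j : ℤ, E ∈ geN S le j) → IsZero E)

/-- A semiorthogonal decomposition `C = ⟨S₁, S₂⟩`. -/
structure IsSOD (S₁ S₂ : Set C) : Prop where
  sub₁ : IsTriangulatedSub S₁
  sub₂ : IsTriangulatedSub S₂
  orth : ∀ X ∈ S₂, ∀ Y ∈ S₁, ∀ f : X ⟶ Y, f = 0
  exists_triangle : ∀ E : C, ∃ (A B : C) (_ : A ∈ S₂) (_ : B ∈ S₁)
    (f : A ⟶ E) (g : E ⟶ B) (h : B ⟶ A⟦(1 : ℤ)⟧), Triangle.mk f g h ∈ distTriang C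

/-- Compatibility of t-structures `le₁` on `S₁` and `le₂` on `S₂` in `C`:
`Hom(S₁^{≤0}, S₂^{≥1}) = 0`. -/
def Compatible (S₂ le₁ le₂ : Set C) : Prop :=
  ∀ X ∈ le₁, ∀ Y ∈ S₂ ∩ rOrth le₂, ∀ f : X ⟶ Y, f = 0

/-- The glued aisle `T^{≤0} := T₂^{≤0} * (T₁^{≤0}[1])`. -/
def glued (le₁ le₂ : Set C) : Set C := star le₂ (shSet le₁ 1)

/-- A map between shifts by `1` vanishes if all maps between the objects do. -/
lemma hom_shift_zero {X Y : C} (h : ∀ f : X ⟶ Y, f = 0)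
    (f : X⟦(1 : ℤ)⟧ ⟶ Y⟦(1 : ℤ)⟧) : f = 0 := by
  obtain ⟨g, rfl⟩ := (shiftFunctor C (1 : ℤ)).map_surjective f
  rw [h g, Functor.map_zero]

/-- If all maps `X ⟶ B` vanish, composition with `A⟦1⟧ ⟶ E⟦1⟧` is injective on maps from `X`. -/
lemma inj_shift (T : Triangle C) (hT : T ∈ distTriang C) {X : C}
    (h : ∀ f : X ⟶ T.obj₃, f = 0) (x : X ⟶ T.obj₁⟦(1 : ℤ)⟧)
    (hx : x ≫ T.mor₁⟦(1 : ℤ)⟧' = 0) : x = 0 := by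
  obtain ⟨y, hy⟩ := Triangle.coyoneda_exact₁ T hT x hx
  rw [hy, h y, zero_comp]

/-- If all maps `X ⟶ B` vanish, maps `X ⟶ E` lift to `A`. -/
lemma surj_lift (T : Triangle C) (hT : T ∈ distTriang C) {X : C}
    (h : ∀ f : X ⟶ T.obj₃, f = 0) (x : X ⟶ T.obj₂) : ∃ y : X ⟶ T.obj₁, x = y ≫ T.mor₁ :=
  Triangle.coyoneda_exact₂ T hT x (h _)

/-- Exactness at the shifted middle object. -/
lemma shift_lift (T : Triangle C) (hT : T ∈ distTriang C) {X : C}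
    (x : X ⟶ T.obj₂⟦(1 : ℤ)⟧) (hx : x ≫ T.mor₂⟦(1 : ℤ)⟧' = 0) :
    ∃ y : X ⟶ T.obj₁⟦(1 : ℤ)⟧, x = y ≫ T.mor₁⟦(1 : ℤ)⟧' := by
  obtain ⟨y, hy⟩ : ∃ y : X ⟶ T.obj₁⟦(1 : ℤ)⟧, x = y ≫ (-T.mor₁⟦(1 : ℤ)⟧') :=
    Triangle.coyoneda_exact₁ _ (rot_of_distTriang _ hT) x hx
  exact ⟨-y, by rw [hy, Preadditive.comp_neg, Preadditive.neg_comp]⟩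

/-- The two four-lemmas: vanishing of maps into the outer cones implies vanishing
of the maps into the middle cone. -/
lemma cone_orth (T T' : Triangle C) (hT : T ∈ distTriang C) (hT' : T' ∈ distTriang C)
    (φ : T ⟶ T') {B₁ B₂ B₃ : C}
    {p₁ : T'.obj₁ ⟶ B₁} {q₁ : B₁ ⟶ T.obj₁⟦(1 : ℤ)⟧}
    {p₂ : T'.obj₂ ⟶ B₂} {q₂ : B₂ ⟶ T.obj₂⟦(1 : ℤ)⟧}
    {p₃ : T'.obj₃ ⟶ B₃} {q₃ : B₃ ⟶ T.obj₃⟦(1 : ℤ)⟧}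
    (d₁ : Triangle.mk φ.hom₁ p₁ q₁ ∈ distTriang C)
    (d₂ : Triangle.mk φ.hom₂ p₂ q₂ ∈ distTriang C)
    (d₃ : Triangle.mk φ.hom₃ p₃ q₃ ∈ distTriang C)
    {X : C} (z₁ : ∀ f : X ⟶ B₁, f = 0) (z₃ : ∀ f : X ⟶ B₃, f = 0)
    (f : X ⟶ B₂) : f = 0 := by
  have i₁ : ∀ x : X ⟶ T.obj₁⟦(1 : ℤ)⟧, x ≫ φ.hom₁⟦(1 : ℤ)⟧' = 0 → x = 0 :=
    inj_shift _ d₁ z₁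
  have i₃ : ∀ x : X ⟶ T.obj₃⟦(1 : ℤ)⟧, x ≫ φ.hom₃⟦(1 : ℤ)⟧' = 0 → x = 0 :=
    inj_shift _ d₃ z₃
  have s₁ : ∀ x : X ⟶ T'.obj₁, ∃ y, x = y ≫ φ.hom₁ := surj_lift _ d₁ z₁
  have s₃ : ∀ x : X ⟶ T'.obj₃, ∃ y, x = y ≫ φ.hom₃ := surj_lift _ d₃ z₃
  have c₁ := φ.comm₁
  have c₂ := φ.comm₂
  have c₃ := φ.comm₃
  have c₁s : T.mor₁⟦(1 : ℤ)⟧' ≫ φ.hom₂⟦(1 : ℤ)⟧' = φ.hom₁⟦(1 : ℤ)⟧' ≫ T'.mor₁⟦(1 : ℤ)⟧' := by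
    rw [← Functor.map_comp, c₁, Functor.map_comp]
  have c₂s : T.mor₂⟦(1 : ℤ)⟧' ≫ φ.hom₃⟦(1 : ℤ)⟧' = φ.hom₂⟦(1 : ℤ)⟧' ≫ T'.mor₂⟦(1 : ℤ)⟧' := by
    rw [← Functor.map_comp, c₂, Functor.map_comp]
  -- surjectivity in the middle
  have s₂ : ∀ x : X ⟶ T'.obj₂, ∃ y, x = y ≫ φ.hom₂ := by
    intro x
    obtain ⟨w, hw⟩ := s₃ (x ≫ T'.mor₂)
    have hw0 : w ≫ T.mor₃ = 0 := by
      apply i₁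
      rw [assoc, c₃, ← assoc, ← hw, assoc, comp_distTriang_mor_zero₂₃ _ hT', comp_zero]
    obtain ⟨v, hv⟩ := Triangle.coyoneda_exact₃ T hT w hw0
    have h0 : (x - v ≫ φ.hom₂) ≫ T'.mor₂ = 0 := by
      rw [Preadditive.sub_comp, assoc, ← c₂, ← assoc, ← hv, hw, sub_self]
    obtain ⟨u, hu⟩ := Triangle.coyoneda_exact₂ T' hT' _ h0
    obtain ⟨t, rfl⟩ := s₁ u
    refine ⟨v + t ≫ T.mor₁, ?_⟩
    rw [Preadditive.add_comp, assoc, c₁, ← assoc, ← hu]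
    abel
  -- injectivity in the middle
  have i₂ : ∀ x : X ⟶ T.obj₂⟦(1 : ℤ)⟧, x ≫ φ.hom₂⟦(1 : ℤ)⟧' = 0 → x = 0 := by
    intro x hx
    have h0 : x ≫ T.mor₂⟦(1 : ℤ)⟧' = 0 := by
      apply i₃
      rw [assoc, c₂s, ← assoc, hx, zero_comp]
    obtain ⟨y, hy⟩ : ∃ y : X ⟶ T.obj₁⟦(1 : ℤ)⟧, x = y ≫ T.mor₁⟦(1 : ℤ)⟧' :=
      shift_lift T hT x h0
    have h1 : (y ≫ φ.hom₁⟦(1 : ℤ)⟧') ≫ T'.mor₁⟦(1 : ℤ)⟧' = 0 := by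
      rw [assoc, ← c₁s, ← assoc, ← hy, hx]
    obtain ⟨z, hz⟩ := Triangle.coyoneda_exact₁ T' hT' _ h1
    obtain ⟨w, rfl⟩ := s₃ z
    have h2 : y - w ≫ T.mor₃ = 0 := by
      apply i₁
      rw [Preadditive.sub_comp, hz, assoc, assoc, c₃, sub_self]
    rw [hy, sub_eq_zero.1 h2, assoc, comp_distTriang_mor_zero₃₁ _ hT, comp_zero]
  have hf : f ≫ q₂ = 0 := by
    apply i₂
    have : q₂ ≫ φ.hom₂⟦(1 : ℤ)⟧' = 0 := comp_distTriang_mor_zero₃₁ _ d₂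
    rw [assoc, this, comp_zero]
  obtain ⟨e, he⟩ : ∃ e : X ⟶ T'.obj₂, f = e ≫ p₂ := Triangle.coyoneda_exact₃ _ d₂ f hf
  obtain ⟨y, hy⟩ := s₂ e
  have : φ.hom₂ ≫ p₂ = 0 := comp_distTriang_mor_zero₁₂ _ d₂
  rw [he, hy, assoc, this, comp_zero]

/-- Transport of a distinguished triangle along an isomorphism of the middle object. -/
lemma mk_iso₂ {A E E' B : C} {f : A ⟶ E} {g : E ⟶ B} {h : B ⟶ A⟦(1 : ℤ)⟧}
    (hd : Triangle.mk f g h ∈ distTriang C) (e : E ≅ E') :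
    Triangle.mk (f ≫ e.hom) (e.inv ≫ g) h ∈ distTriang C :=
  isomorphic_distinguished _ hd _
    (Triangle.isoMk _ _ (Iso.refl A) e.symm (Iso.refl B)
      (show (f ≫ e.hom) ≫ e.inv = 𝟙 A ≫ f by simp)
      (show (e.inv ≫ g) ≫ 𝟙 B = e.inv ≫ g by simp)
      (show h ≫ (𝟙 A)⟦(1 : ℤ)⟧' = 𝟙 B ≫ h by simp))

/-- The shift of a distinguished triangle, without naming the maps. -/
lemma shift_triangle {A E B : C} {f : A ⟶ E} {g : E ⟶ B} {h : B ⟶ A⟦(1 : ℤ)⟧}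
    (hd : Triangle.mk f g h ∈ distTriang C) :
    ∃ (f' : A⟦(1 : ℤ)⟧ ⟶ E⟦(1 : ℤ)⟧) (g' : E⟦(1 : ℤ)⟧ ⟶ B⟦(1 : ℤ)⟧)
      (h' : B⟦(1 : ℤ)⟧ ⟶ A⟦(1 : ℤ)⟧⟦(1 : ℤ)⟧), Triangle.mk f' g' h' ∈ distTriang C :=
  ⟨_, _, _, Triangle.shift_distinguished _ hd 1⟩

/-- Theorem 2.7, first part: given a semiorthogonal decomposition
`C = ⟨S₁, S₂⟩` and compatible t-structures `le₁` on `S₁` and `le₂` on `S₂`, the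
full subcategory `T^{≤0} := T₂^{≤0} * (T₁^{≤0}[1])` is a t-structure on `C`. -/
theorem glued_isTStructure {C : Type u} [Category.{v} C] [HasZeroObject C] [Preadditive C]
    [HasShift C ℤ] [∀ n : ℤ, (shiftFunctor C n).Additive] [Pretriangulated C]
    (S₁ S₂ le₁ le₂ : Set C) (hSOD : IsSOD S₁ S₂)
    (h₁ : IsTStructureOn S₁ le₁) (h₂ : IsTStructureOn S₂ le₂)
    (hcomp : Compatible S₂ le₁ le₂) :
    IsTStructureOn Set.univ (glued le₁ le₂) := by
  refine ⟨Set.subset_univ _, ?_, ?_, ?_⟩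
  · rintro X Y e ⟨A, hA, B, hB, f, g, h, hd⟩
    exact ⟨A, hA, B, hB, _, _, _, mk_iso₂ hd e⟩
  · rintro Z ⟨A, hA, B, ⟨X, hX, ⟨e⟩⟩, f, g, h, hd⟩
    obtain ⟨f', g', h', hd'⟩ := shift_triangle hd
    exact ⟨_, h₂.shift _ hA, _, ⟨_, h₁.shift _ hX, ⟨(shiftFunctor C (1 : ℤ)).mapIso e⟩⟩,
      f', g', h', hd'⟩
  · intro E _
    obtain ⟨E₂, E₁, hE₂, hE₁, f, g, h, hd⟩ := hSOD.exists_triangle E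
    obtain ⟨X, Y, hX, hY, a₀, b₀, c₀, hd₀⟩ :=
      h₁.exists_triangle _ (hSOD.sub₁.shift (-1) _ hE₁)
    obtain ⟨a₁, b₁, c₁, hd₁⟩ := shift_triangle hd₀
    have d₃ := mk_iso₂ hd₁ (shiftNegShift E₁ (1 : ℤ))
    set a := a₁ ≫ (shiftNegShift E₁ (1 : ℤ)).hom
    obtain ⟨A₂, B₂, hA₂, hB₂, i, p, q, d₁⟩ := h₂.exists_triangle _ hE₂
    -- lift the connecting map
    obtain ⟨k, hk⟩ : ∃ k : X⟦(1 : ℤ)⟧ ⟶ A₂⟦(1 : ℤ)⟧, a ≫ h = k ≫ i⟦(1 : ℤ)⟧' := by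
      have h0 : (a ≫ h) ≫ p⟦(1 : ℤ)⟧' = 0 := hom_shift_zero (hcomp X hX B₂ hB₂) _
      exact shift_lift _ d₁ (a ≫ h) h0
    obtain ⟨H, u, v, hH⟩ := distinguished_cocone_triangle₂ k
    obtain ⟨m, hm₁, hm₂⟩ := complete_distinguished_triangle_morphism₂ _ _ hH hd i a hk.symm
    obtain ⟨K, r, s, d₂⟩ := distinguished_cocone_triangle m
    let φ : Triangle.mk u v k ⟶ Triangle.mk f g h :=
      { hom₁ := i, hom₂ := m, hom₃ := a
        comm₁ := hm₁, comm₂ := hm₂, comm₃ := hk.symm }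
    have key : ∀ Z : C, (∀ t : Z ⟶ B₂, t = 0) → (∀ t : Z ⟶ Y⟦(1 : ℤ)⟧, t = 0) →
        ∀ t : Z ⟶ K, t = 0 := fun Z z₁ z₃ t =>
      cone_orth _ _ hH hd φ d₁ d₂ d₃ z₁ z₃ t
    have hB₂' : B₂⟦(-1 : ℤ)⟧ ∈ S₂ ∩ rOrth le₂ := by
      refine ⟨hSOD.sub₂.shift _ _ hB₂.1, fun Z hZ t => ?_⟩
      apply (shiftFunctor C (1 : ℤ)).map_injective
      rw [Functor.map_zero, ← cancel_mono (shiftNegShift B₂ (1 : ℤ)).hom, zero_comp]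
      exact hB₂.2 _ (h₂.shift _ hZ) _
    refine ⟨H, K, ⟨A₂, hA₂, _, ⟨X, hX, ⟨Iso.refl _⟩⟩, u, v, k, hH⟩, ⟨Set.mem_univ _, ?_⟩,
      m, r, s, d₂⟩
    rintro Z ⟨A, hA, B, ⟨W, hW, ⟨e⟩⟩, f', g', h', hd'⟩ t
    have hAK : ∀ t : A ⟶ K, t = 0 := key A (hB₂.2 A hA)
      (hSOD.orth _ (h₂.subset hA) _ (hSOD.sub₁.shift _ _ hY.1))
    have hWK : ∀ t : W⟦(1 : ℤ)⟧ ⟶ K, t = 0 := by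
      refine key _ (fun t => ?_) (hom_shift_zero (hY.2 W hW))
      rw [← cancel_mono (shiftNegShift B₂ (1 : ℤ)).inv, zero_comp]
      exact hom_shift_zero (hcomp W hW _ hB₂') _
    obtain ⟨y, hy⟩ : ∃ y : B ⟶ K, t = g' ≫ y := Triangle.yoneda_exact₂ _ hd' t (hAK _)
    have hy0 : y = 0 := by
      rw [← cancel_epi e.inv, comp_zero]
      exact hWK _
    rw [hy, hy0, comp_zero]

end Paper
end

section
/- Let T be a triangulated category with a semiorthogonal decomposition T = ⟨T₁, T₂⟩, and let T₁^{≤0} and T₂^{≤0} be t-structures on T₁ and T₂ respectively that are compatible in T, so that T^{≤0} := T₂^{≤0} * (T₁^{≤0}[1]) is a t-structure on T. If T₁^{≤0} and T₂^{≤0} are both non-degenerate, then T^{≤0} is a non-degenerate t-structure on T. -/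
open CategoryTheory Category Limits Pretriangulated

namespace Paper

universe v u

variable {C : Type u} [Category.{v} C] [HasZeroObject C] [Preadditive C]
  [HasShift C ℤ] [∀ n : ℤ, (shiftFunctor C n).Additive] [Pretriangulated C]

section Helpers

set_option linter.unusedSectionVars false

variable {C : Type u} [Category.{v} C] [HasZeroObject C] [Preadditive C]
  [HasShift C ℤ] [∀ n : ℤ, (shiftFunctor C n).Additive] [Pretriangulated C]

/-- All morphisms from `X` to `Y` vanish. -/
def HZ (X Y : C) : Prop := ∀ f : X ⟶ Y, f = 0

lemma HZ.of_iso {X X' Y Y' : C} (h : HZ X Y) (e : X' ≅ X) (e' : Y' ≅ Y) : HZ X' Y' := by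
  intro f
  have := h (e.inv ≫ f ≫ e'.hom)
  have h2 : f = e.hom ≫ (e.inv ≫ f ≫ e'.hom) ≫ e'.inv := by simp
  rw [h2, this]; simp

lemma HZ.shift {X Y : C} (h : HZ X Y) (n : ℤ) : HZ (X⟦n⟧) (Y⟦n⟧) := by
  intro f
  obtain ⟨g, rfl⟩ := (shiftFunctor C n).map_surjective f
  rw [h g]; simp

lemma HZ.unshift {X Y : C} (n : ℤ) (h : HZ (X⟦n⟧) (Y⟦n⟧)) : HZ X Y := by
  intro f
  apply (shiftFunctor C n).map_injective
  rw [h (f⟦n⟧')]; simp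

lemma HZ.ext_left (T : Triangle C) (hT : T ∈ distTriang C) {Y : C} (h₁ : HZ T.obj₁ Y)
    (h₃ : HZ T.obj₃ Y) : HZ T.obj₂ Y := by
  intro f
  obtain ⟨g, rfl⟩ := T.yoneda_exact₂ hT f (h₁ _)
  rw [h₃ g]; simp

lemma surj_of (T : Triangle C) (hT : T ∈ distTriang C) {X : C} (h : HZ X T.obj₃)
    (x : X ⟶ T.obj₂) : ∃ y : X ⟶ T.obj₁, y ≫ T.mor₁ = x := by
  obtain ⟨g, hg⟩ := T.coyoneda_exact₂ hT x (h _)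
  exact ⟨g, hg.symm⟩

lemma inj_of (T : Triangle C) (hT : T ∈ distTriang C) {X : C} (h : HZ X T.obj₃)
    (x : X ⟶ T.obj₁⟦(1 : ℤ)⟧) (hx : x ≫ T.mor₁⟦1⟧' = 0) : x = 0 := by
  obtain ⟨g, rfl⟩ := T.coyoneda_exact₁ hT x hx
  rw [h g]; simp

lemma exact_shift (T : Triangle C) (hT : T ∈ distTriang C) {X : C}
    (y : X ⟶ T.obj₂⟦(1 : ℤ)⟧) (hy : y ≫ T.mor₂⟦1⟧' = 0) :
    ∃ z : X ⟶ T.obj₁⟦(1 : ℤ)⟧, y = z ≫ T.mor₁⟦1⟧' := by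
  obtain ⟨z, hz⟩ := T.rotate.coyoneda_exact₁ (rot_of_distTriang _ hT) y hy
  change X ⟶ T.obj₁⟦(1 : ℤ)⟧ at z
  have hz' : y = z ≫ (-T.mor₁⟦1⟧') := hz
  exact ⟨-z, by rw [hz']; simp⟩

lemma four (T T' : Triangle C) (hT : T ∈ distTriang C) (hT' : T' ∈ distTriang C) (φ : T ⟶ T')
    {X B : C} {g : T'.obj₂ ⟶ B} {h : B ⟶ T.obj₂⟦(1 : ℤ)⟧}
    (hB : Triangle.mk φ.hom₂ g h ∈ distTriang C)
    (s1 : ∀ x : X ⟶ T'.obj₁, ∃ y : X ⟶ T.obj₁, y ≫ φ.hom₁ = x)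
    (s3 : ∀ x : X ⟶ T'.obj₃, ∃ y : X ⟶ T.obj₃, y ≫ φ.hom₃ = x)
    (i1 : ∀ x : X ⟶ T.obj₁⟦(1 : ℤ)⟧, x ≫ φ.hom₁⟦1⟧' = 0 → x = 0)
    (i3 : ∀ x : X ⟶ T.obj₃⟦(1 : ℤ)⟧, x ≫ φ.hom₃⟦1⟧' = 0 → x = 0) : HZ X B := by
  have s2 : ∀ x : X ⟶ T'.obj₂, ∃ y : X ⟶ T.obj₂, y ≫ φ.hom₂ = x := by
    intro x
    obtain ⟨z, hz⟩ := s3 (x ≫ T'.mor₂)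
    have hz0 : z ≫ T.mor₃ = 0 := by
      apply i1
      rw [assoc, φ.comm₃, reassoc_of% hz, comp_distTriang_mor_zero₂₃ _ hT', comp_zero]
    obtain ⟨y, rfl⟩ := T.coyoneda_exact₃ hT z hz0
    obtain ⟨w, hw⟩ := T'.coyoneda_exact₂ hT' (x - y ≫ φ.hom₂) (by
      rw [Preadditive.sub_comp, ← hz, assoc, assoc, φ.comm₂, sub_self])
    obtain ⟨v, rfl⟩ := s1 w
    refine ⟨y + v ≫ T.mor₁, ?_⟩
    rw [assoc, ← φ.comm₁, ← assoc] at hw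
    rw [Preadditive.add_comp, assoc, φ.comm₁, ← assoc] 
    simp only [assoc] at hw ⊢
    rw [φ.comm₁] at hw
    rw [← φ.comm₁, φ.comm₁, ← hw]; abel
  have i2 : ∀ y : X ⟶ T.obj₂⟦(1 : ℤ)⟧, y ≫ φ.hom₂⟦1⟧' = 0 → y = 0 := by
    intro y hy
    have h1 : y ≫ T.mor₂⟦1⟧' = 0 := by
      apply i3
      rw [assoc, ← Functor.map_comp, φ.comm₂, Functor.map_comp, reassoc_of% hy, zero_comp]
    obtain ⟨z, rfl⟩ := exact_shift T hT y h1
    have h2 : (z ≫ φ.hom₁⟦1⟧') ≫ T'.mor₁⟦1⟧' = 0 := by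
      rw [assoc, ← Functor.map_comp, ← φ.comm₁, Functor.map_comp]
      simpa using hy
    obtain ⟨w, hw⟩ := T'.coyoneda_exact₁ hT' _ h2
    obtain ⟨v, rfl⟩ := s3 w
    have h3 : z - v ≫ T.mor₃ = 0 := by
      apply i1
      rw [Preadditive.sub_comp, hw, assoc, assoc, φ.comm₃, sub_self]
    rw [sub_eq_zero.1 h3, assoc, comp_distTriang_mor_zero₃₁ _ hT, comp_zero]
  intro f
  have hf : f ≫ h = 0 := by
    apply i2
    have : h ≫ φ.hom₂⟦1⟧' = 0 := comp_distTriang_mor_zero₃₁ _ hB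
    rw [assoc, this, comp_zero]
  obtain ⟨x, hx⟩ := Triangle.coyoneda_exact₃ _ hB f hf
  obtain ⟨y, hy⟩ := s2 x
  have : φ.hom₂ ≫ g = 0 := comp_distTriang_mor_zero₁₂ _ hB
  change X ⟶ T'.obj₂ at x
  change f = x ≫ g at hx
  rw [hx, ← hy, assoc, this, comp_zero]

lemma shSet_iso {S : Set C} {n : ℤ} {X Y : C} (e : X ≅ Y) (h : X ∈ shSet S n) :
    Y ∈ shSet S n := by
  obtain ⟨Z, hZ, ⟨e'⟩⟩ := h
  exact ⟨Z, hZ, ⟨e.symm ≪≫ e'⟩⟩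

noncomputable def shIso (X : C) (a b : ℤ) (h : a + b = 0) : X⟦a⟧⟦b⟧ ≅ X :=
  (shiftFunctorCompIsoId C a b h).app X

lemma exists_shift {A E B : C} {f : A ⟶ E} {g : E ⟶ B} {h : B ⟶ A⟦(1 : ℤ)⟧}
    (hT : Triangle.mk f g h ∈ distTriang C) (n : ℤ) :
    ∃ (f' : A⟦n⟧ ⟶ E⟦n⟧) (g' : E⟦n⟧ ⟶ B⟦n⟧) (h' : B⟦n⟧ ⟶ A⟦n⟧⟦(1 : ℤ)⟧),
      Triangle.mk f' g' h' ∈ distTriang C :=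
  ⟨_, _, _, Triangle.shift_distinguished _ hT n⟩

lemma exists_iso_mid {A E B E' : C} {f : A ⟶ E} {g : E ⟶ B} {h : B ⟶ A⟦(1 : ℤ)⟧}
    (hT : Triangle.mk f g h ∈ distTriang C) (e : E ≅ E') :
    Triangle.mk (f ≫ e.hom) (e.inv ≫ g) h ∈ distTriang C := by
  refine isomorphic_distinguished _ hT _ (Triangle.isoMk _ _ (Iso.refl _) e.symm (Iso.refl _) ?_ ?_ ?_)
  · change (f ≫ e.hom) ≫ e.inv = 𝟙 A ≫ f
    simp
  · change (e.inv ≫ g) ≫ 𝟙 B = e.inv ≫ g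
    simp
  · change h ≫ (𝟙 A)⟦1⟧' = 𝟙 B ≫ h
    simp

lemma uniq {A E B A' B' : C} {f : A ⟶ E} {g : E ⟶ B} {h : B ⟶ A⟦(1 : ℤ)⟧}
    (hT : Triangle.mk f g h ∈ distTriang C)
    {f' : A' ⟶ E} {g' : E ⟶ B'} {h' : B' ⟶ A'⟦(1 : ℤ)⟧}
    (hT' : Triangle.mk f' g' h' ∈ distTriang C)
    (z1 : HZ A B') (z2 : HZ A' B) (z3 : HZ (A⟦(1 : ℤ)⟧) B) (z4 : HZ (A'⟦(1 : ℤ)⟧) B')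
    (z5 : HZ (A⟦(1 : ℤ)⟧) B') (z6 : HZ (A'⟦(1 : ℤ)⟧) B) :
    Nonempty (A ≅ A') ∧ Nonempty (B ≅ B') := by
  have inj : ∀ {A E B : C} {f : A ⟶ E} {g : E ⟶ B} {h : B ⟶ A⟦(1 : ℤ)⟧},
      Triangle.mk f g h ∈ distTriang C → ∀ {Y : C}, HZ (A⟦(1 : ℤ)⟧) Y →
      ∀ u v : B ⟶ Y, g ≫ u = g ≫ v → u = v := by
    intro A E B f g h hT Y hY u v huv
    obtain ⟨w, hw⟩ := Triangle.yoneda_exact₃ _ hT (u - v) (by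
      change g ≫ (u - v) = 0
      rw [Preadditive.comp_sub, huv, sub_self])
    change A⟦(1 : ℤ)⟧ ⟶ Y at w
    change u - v = h ≫ w at hw
    rw [hY w, comp_zero] at hw
    exact sub_eq_zero.1 hw
  obtain ⟨b, hb⟩ := Triangle.yoneda_exact₂ _ hT g' (z1 _)
  obtain ⟨b', hb'⟩ := Triangle.yoneda_exact₂ _ hT' g (z2 _)
  change B ⟶ B' at b
  change B' ⟶ B at b'
  change g' = g ≫ b at hb
  change g = g' ≫ b' at hb'
  let eB : B ≅ B' :=
    { hom := b
      inv := b'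
      hom_inv_id := inj hT z3 _ _ (by rw [← assoc, ← hb, ← hb', comp_id])
      inv_hom_id := inj hT' z4 _ _ (by rw [← assoc, ← hb', ← hb, comp_id]) }
  obtain ⟨a, ha1, ha2⟩ := complete_distinguished_triangle_morphism₁ _ _ hT hT' (𝟙 E) b
    (by change g ≫ b = 𝟙 E ≫ g'; rw [id_comp, hb])
  let φ : Triangle.mk f g h ⟶ Triangle.mk f' g' h' :=
    { hom₁ := a, hom₂ := 𝟙 E, hom₃ := b, comm₁ := ha1
      comm₂ := by change g ≫ b = 𝟙 E ≫ g'; rw [id_comp, hb]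
      comm₃ := ha2 }
  have : IsIso a := isIso₁_of_isIso₂₃ φ hT hT' (inferInstanceAs (IsIso (𝟙 E)))
    (Iso.isIso_hom eB)
  exact ⟨⟨@asIso _ _ _ _ a this⟩, ⟨eB⟩⟩

lemma tstr_shift {S le : Set C} (hS : IsTriangulatedSub S) (h : IsTStructureOn S le) :
    IsTStructureOn S (shSet le 1) where
  subset := by
    rintro X ⟨Y, hY, ⟨e⟩⟩
    exact hS.isoClosed e.symm (hS.shift _ _ (h.subset hY))
  isoClosed e hX := shSet_iso e hX
  shift := by
    rintro X ⟨Y, hY, ⟨e⟩⟩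
    exact ⟨_, h.shift _ hY, ⟨(shiftFunctor C (1 : ℤ)).mapIso e⟩⟩
  exists_triangle E hE := by
    obtain ⟨A, B, hA, hB, f, g, k, hT⟩ := h.exists_triangle (E⟦(-1 : ℤ)⟧) (hS.shift _ _ hE)
    obtain ⟨f', g', k', hT'⟩ := exists_shift hT 1
    refine ⟨_, _, ⟨A, hA, ⟨Iso.refl _⟩⟩, ⟨hS.shift 1 _ hB.1, ?_⟩, _, _, _,
      exists_iso_mid hT' (shIso E (-1) 1 (by simp))⟩
    rintro X ⟨Y, hY, ⟨e⟩⟩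
    exact HZ.of_iso (HZ.shift (hB.2 Y hY) 1) e (Iso.refl _)

lemma zero_mem {S le : Set C} (hS : IsTriangulatedSub S) (h : IsTStructureOn S le) (X : C)
    (hX : IsZero X) : X ∈ le := by
  obtain ⟨A, B, hA, hB, f, g, k, hT⟩ := h.exists_triangle X (hS.zero X hX)
  have hk : IsIso k := (Triangle.isZero₂_iff_isIso₃ _ hT).1 hX
  have hk0 : inv k = 0 := hB.2 _ (h.shift _ hA) _
  have hB0 : IsZero B := by
    rw [IsZero.iff_id_eq_zero, ← IsIso.hom_inv_id k, hk0, comp_zero]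
  have hf : IsIso f := (Triangle.isZero₃_iff_isIso₁ _ hT).1 hB0
  exact h.isoClosed (asIso f) hA

lemma nondeg_le {S le : Set C} (hn : IsNonDegenerateOn S le) (E : C)
    (hE : ∀ n : ℤ, E⟦n⟧ ∈ le) : IsZero E :=
  hn.1 E fun i => ⟨_, hE i, ⟨(shIso E i (-i) (by simp)).symm⟩⟩

lemma nondeg_ge {S le : Set C} (hS : IsTriangulatedSub S) (hn : IsNonDegenerateOn S le) (E : C)
    (hE : E ∈ S) (h : ∀ n : ℤ, ∀ X ∈ le, HZ X (E⟦n⟧)) : IsZero E :=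
  hn.2 E fun j => ⟨E⟦j - 1⟧, ⟨hS.shift _ _ hE, h _⟩, ⟨(shIso E (j - 1) (1 - j) (by simp)).symm⟩⟩

lemma isZero_unshift {E : C} (n : ℤ) (h : IsZero (E⟦n⟧)) : IsZero E :=
  ((shiftFunctor C (-n)).map_isZero h).of_iso (shIso E n (-n) (by simp)).symm

lemma main_aux (S₁ S₂ le₁ le₂ : Set C) (hSOD : IsSOD S₁ S₂)
    (h₁ : IsTStructureOn S₁ le₁) (h₂ : IsTStructureOn S₂ le₂)
    (c0 : ∀ X ∈ le₁, ∀ Y ∈ S₂ ∩ rOrth le₂, HZ X Y)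
    (c1 : ∀ X ∈ le₁, ∀ Y ∈ S₂ ∩ rOrth le₂, HZ X (Y⟦(1 : ℤ)⟧)) :
    IsTStructureOn Set.univ (star le₂ le₁) where
  subset := Set.subset_univ _
  isoClosed := by
    rintro X Y e ⟨A, hA, B, hB, f, g, h, hT⟩
    exact ⟨A, hA, B, hB, _, _, _, exists_iso_mid hT e⟩
  shift := by
    rintro X ⟨A, hA, B, hB, f, g, h, hT⟩
    exact ⟨_, h₂.shift A hA, _, h₁.shift B hB, exists_shift hT 1⟩
  exists_triangle E _ := by
    obtain ⟨E₂, E₁, hE₂, hE₁, i, p, d, hE⟩ := hSOD.exists_triangle E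
    obtain ⟨A₁, B₁, hA₁, hB₁, f₁, g₁, k₁, hT₁⟩ := h₁.exists_triangle E₁ hE₁
    obtain ⟨A₂, B₂, hA₂, hB₂, f₂, g₂, k₂, hT₂⟩ := h₂.exists_triangle E₂ hE₂
    have hd : ∃ d' : A₁ ⟶ A₂⟦(1 : ℤ)⟧, d' ≫ f₂⟦1⟧' = f₁ ≫ d := by
      obtain ⟨w, hw⟩ := exact_shift _ hT₂ (f₁ ≫ d) (c1 _ hA₁ _ hB₂ _)
      exact ⟨w, hw.symm⟩
    obtain ⟨d', hd'⟩ := hd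
    obtain ⟨A, q, r, hA⟩ := distinguished_cocone_triangle₂ d'
    obtain ⟨a, ha1, ha2⟩ := complete_distinguished_triangle_morphism₂ _ _ hA hE f₂ f₁ hd'
    let φ : Triangle.mk q r d' ⟶ Triangle.mk i p d :=
      { hom₁ := f₂, hom₂ := a, hom₃ := f₁, comm₁ := ha1, comm₂ := ha2, comm₃ := hd' }
    obtain ⟨B, g, h, hB⟩ := distinguished_cocone_triangle a
    refine ⟨A, B, ⟨A₂, hA₂, A₁, hA₁, q, r, d', hA⟩, ⟨trivial, ?_⟩, a, g, h, hB⟩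
    rintro X ⟨P, hP, Q, hQ, u, v, w, hX⟩
    have x1 : HZ X B₁ := HZ.ext_left _ hX (hSOD.orth _ (h₂.subset hP) _ hB₁.1) (hB₁.2 _ hQ)
    have x2 : HZ X B₂ := HZ.ext_left _ hX (hB₂.2 _ hP) (c0 _ hQ _ hB₂)
    exact four _ _ hA hE φ hB (surj_of _ hT₂ x2) (surj_of _ hT₁ x1) (inj_of _ hT₂ x2)
      (inj_of _ hT₁ x1)

end Helpers

/-- Theorem 2.7, item 1, non-degeneracy: if the compatible t-structures
`le₁` and `le₂` are non-degenerate, then the glued t-structure `T₂^{≤0} * (T₁^{≤0}[1])`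
is a non-degenerate t-structure on `C`. -/
theorem glued_isNonDegenerate {C : Type u} [Category.{v} C] [HasZeroObject C] [Preadditive C]
    [HasShift C ℤ] [∀ n : ℤ, (shiftFunctor C n).Additive] [Pretriangulated C]
    (S₁ S₂ le₁ le₂ : Set C) (hSOD : IsSOD S₁ S₂)
    (h₁ : IsTStructureOn S₁ le₁) (h₂ : IsTStructureOn S₂ le₂)
    (hcomp : Compatible S₂ le₁ le₂)
    (hn₁ : IsNonDegenerateOn S₁ le₁) (hn₂ : IsNonDegenerateOn S₂ le₂) :
    IsTStructureOn Set.univ (glued le₁ le₂) ∧ IsNonDegenerateOn Set.univ (glued le₁ le₂) := by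
  have h₁' := tstr_shift hSOD.sub₁ h₁
  have c1 : ∀ X ∈ shSet le₁ 1, ∀ Y ∈ S₂ ∩ rOrth le₂, HZ X (Y⟦(1 : ℤ)⟧) := by
    rintro X ⟨Z, hZ, ⟨e⟩⟩ Y hY
    exact HZ.of_iso (HZ.shift (hcomp Z hZ Y hY) 1) e (Iso.refl _)
  have c0 : ∀ X ∈ shSet le₁ 1, ∀ Y ∈ S₂ ∩ rOrth le₂, HZ X Y := by
    rintro X ⟨Z, hZ, ⟨e⟩⟩ Y hY
    exact HZ.of_iso (hcomp _ (h₁.shift Z hZ) Y hY) e (Iso.refl _)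
  have ht := main_aux S₁ S₂ _ le₂ hSOD h₁' h₂ c0 c1
  have sub₁ := hSOD.sub₁
  have sub₂ := hSOD.sub₂
  refine ⟨ht, ?_, ?_⟩
  · intro E hE
    have hE' : ∀ n : ℤ, E⟦n⟧ ∈ glued le₁ le₂ := by
      intro n
      obtain ⟨X, hX, ⟨e⟩⟩ := hE n
      exact ht.isoClosed ((shiftFunctor C n).mapIso e ≪≫ shIso X (-n) n (by simp)).symm hX
    obtain ⟨E₂, E₁, hE₂, hE₁, i, p, d, hT⟩ := hSOD.exists_triangle E
    have key : ∀ n : ℤ, E₂⟦n⟧ ∈ le₂ ∧ E₁⟦n⟧ ∈ shSet le₁ 1 := by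
      intro n
      obtain ⟨f, g, h, hTn⟩ := exists_shift hT n
      obtain ⟨P, hP, Q, hQ, u, v, w, hX⟩ := hE' n
      have hP' := h₂.subset hP
      have hQ' := h₁'.subset hQ
      have o := hSOD.orth
      have m₂ := sub₂.shift n _ hE₂
      have m₁ := sub₁.shift n _ hE₁
      obtain ⟨⟨e₂⟩, ⟨e₁⟩⟩ := uniq hX hTn (o _ hP' _ m₁) (o _ m₂ _ hQ')
        (o _ (sub₂.shift 1 _ hP') _ hQ') (o _ (sub₂.shift 1 _ m₂) _ m₁)
        (o _ (sub₂.shift 1 _ hP') _ m₁) (o _ (sub₂.shift 1 _ m₂) _ hQ')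
      exact ⟨h₂.isoClosed e₂ hP, h₁'.isoClosed e₁ hQ⟩
    have z₂ : IsZero E₂ := nondeg_le hn₂ E₂ fun n => (key n).1
    have z₁ : IsZero E₁ := by
      apply nondeg_le hn₁
      intro n
      obtain ⟨X, hX, ⟨e⟩⟩ := (key (n + 1)).2
      refine h₁.isoClosed ?_ hX
      exact (shIso X 1 (-1) (by simp)).symm ≪≫ (shiftFunctor C (-1 : ℤ)).mapIso e.symm ≪≫
        ((shiftFunctorAdd' C (n + 1) (-1) n (by simp)).app E₁).symm
    have hp : IsIso p := (Triangle.isZero₁_iff_isIso₂ _ hT).1 z₂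
    exact z₁.of_iso (asIso p)
  · intro E hE
    have hE' : ∀ n : ℤ, ∀ X ∈ glued le₁ le₂, HZ X (E⟦n⟧) := by
      intro n X hX
      obtain ⟨Y, hY, ⟨e⟩⟩ := hE (n + 1)
      refine HZ.of_iso (hY.2 X hX) (Iso.refl _) ?_
      exact (shiftFunctor C n).mapIso e ≪≫ shIso Y _ _ (by simp)
    have l₂ : ∀ X ∈ le₂, X ∈ glued le₁ le₂ := fun X hX =>
      ⟨X, hX, _, zero_mem sub₁ h₁' _ (isZero_zero C), _, _, _, contractible_distinguished X⟩
    have l₁ : ∀ X ∈ shSet le₁ 1, X ∈ glued le₁ le₂ := fun X hX =>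
      ⟨_, zero_mem sub₂ h₂ _ (isZero_zero C), X, hX, _, _, _, contractible_distinguished₁ X⟩
    obtain ⟨E₂, E₁, hE₂, hE₁, i, p, d, hT⟩ := hSOD.exists_triangle E
    have z₂ : IsZero E₂ := by
      apply nondeg_ge sub₂ hn₂ _ hE₂
      intro n X hX
      obtain ⟨f, g, h, hTn⟩ := exists_shift hT n
      intro x
      have hx : HZ (X⟦(1 : ℤ)⟧) (E₁⟦n⟧) :=
        hSOD.orth _ (sub₂.shift 1 _ (h₂.subset hX)) _ (sub₁.shift n _ hE₁)
      apply (shiftFunctor C (1 : ℤ)).map_injective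
      rw [Functor.map_zero]
      apply inj_of _ hTn hx
      exact HZ.shift (hE' n X (l₂ X hX)) 1 _
    have hp : IsIso p := (Triangle.isZero₁_iff_isIso₂ _ hT).1 z₂
    have z₁ : IsZero E₁ := by
      apply nondeg_ge sub₁ hn₁ _ hE₁
      intro n X hX
      have hx := hE' (n + 1) (X⟦(1 : ℤ)⟧) (l₁ _ ⟨X, hX, ⟨Iso.refl _⟩⟩)
      apply HZ.unshift 1
      exact HZ.of_iso hx (Iso.refl _) (((shiftFunctorAdd' C n 1 (n + 1) rfl).app E₁).symm ≪≫
        (shiftFunctor C (n + 1)).mapIso (asIso p).symm)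
    exact z₁.of_iso (asIso p)

end Paper
end

section
/- Let F : D → T be a fully faithful exact functor between triangulated categories, and let A be the heart of a bounded t-structure on T such that every object of A lies in the essential image of F. Then F is essentially surjective, hence an exact equivalence. -/
open CategoryTheory Category Limits Pretriangulated
namespace Paper
universe v u

variable {C : Type u} [Category.{v} C] [HasZeroObject C] [Preadditive C]
  [HasShift C ℤ] [∀ n : ℤ, (shiftFunctor C n).Additive] [Pretriangulated C]

/-- Bridgeland's characterization of a heart of a bounded t-structure on `C`:
a full additive subcategory (closed under isomorphisms, zero objects and finite
direct sums) with no negative self-extensions, such that every object admits a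
filtration with shifted-heart factors, for strictly decreasing shifts. -/
structure IsHeart [HasBinaryBiproducts C] (H : Set C) : Prop where
  isoClosed : ∀ {X Y : C}, (X ≅ Y) → X ∈ H → Y ∈ H
  zero : ∀ X : C, IsZero X → X ∈ H
  sums : ∀ {X Y : C}, X ∈ H → Y ∈ H → (X ⊞ Y) ∈ H
  neg_vanish : ∀ A ∈ H, ∀ B ∈ H, ∀ n : ℤ, n < 0 → ∀ f : A ⟶ B⟦n⟧, f = 0
  filtration : ∀ E : C, ∃ (m : ℕ) (obj : Fin (m+1) → C)
    (map : ∀ i : Fin m, obj i.castSucc ⟶ obj i.succ) (k : Fin m → ℤ),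
    IsZero (obj 0) ∧ obj (Fin.last m) = E ∧ (∀ i j : Fin m, i < j → k j < k i) ∧
    ∀ i : Fin m, ∃ (A : C) (_ : A ∈ H) (g : obj i.succ ⟶ A⟦k i⟧)
      (h : A⟦k i⟧ ⟶ (obj i.castSucc)⟦(1:ℤ)⟧),
      Triangle.mk (map i) g h ∈ distTriang C

/-- `F` is a triangulated (exact) functor with respect to the commutation-with-shift
data `cs`. -/
def IsTriangulatedWith {D : Type*} [Category D] [HasZeroObject D] [Preadditive D]
    [HasShift D ℤ] [∀ n : ℤ, (shiftFunctor D n).Additive] [Pretriangulated D]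
    (F : C ⥤ D) (cs : F.CommShift ℤ) : Prop := by
  letI := cs; exact F.IsTriangulated

/-- a fully faithful exact functor `F : D ⥤ T` such that every object
of the heart of a bounded t-structure on `T` lies in the essential image of `F` is
essentially surjective, hence an exact equivalence. -/
theorem essSurj_of_heart_in_image {D : Type*} [Category D] [HasZeroObject D]
    [Preadditive D] [HasShift D ℤ] [∀ n : ℤ, (shiftFunctor D n).Additive] [Pretriangulated D]
    {T : Type*} [Category T] [HasZeroObject T] [Preadditive T] [HasShift T ℤ]
    [∀ n : ℤ, (shiftFunctor T n).Additive] [Pretriangulated T] [HasBinaryBiproducts T]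
    (F : D ⥤ T) (cs : F.CommShift ℤ) (hF : IsTriangulatedWith F cs)
    [F.Full] [F.Faithful]
    (H : Set T) (hH : IsHeart H)
    (himg : ∀ X ∈ H, ∃ Y : D, Nonempty (F.obj Y ≅ X)) :
    F.EssSurj ∧ F.IsEquivalence := by
  letI := cs
  haveI : F.IsTriangulated := hF
  have hsh : ∀ (X : T) (n : ℤ), F.essImage X → F.essImage (X⟦n⟧) := by
    intro X n h
    exact F.essImage.le_shift n X h
  have hE : F.EssSurj := by
    refine ⟨fun E => ?_⟩
    obtain ⟨m, obj, map, k, h0, hm, -, ht⟩ := hH.filtration E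
    have key : ∀ i : Fin (m + 1), F.essImage (obj i) := by
      intro i
      induction i using Fin.induction with
      | zero => exact F.essImage.prop_of_isZero h0
      | succ i ih =>
        obtain ⟨A, hA, g, h, hd⟩ := ht i
        exact F.essImage.ext_of_isTriangulatedClosed₂ _ hd ih (hsh A _ (himg A hA))
    exact hm ▸ key (Fin.last m)
  exact ⟨hE, { }⟩

end Paper
end

section
/- Let T be a triangulated category with a semiorthogonal decomposition T = ⟨T₁, T₂⟩ and compatible t-structures T₁^{≤0}, T₂^{≤0} with hearts A₁, A₂, and let A = A₂ * (A₁[1]) be the glued heart on T. Assume: (1) for i = 1, 2, the category T_i has the factorization property for A_i; and (2) for every A ∈ A₁[1], every B ∈ A₂ and every m ≥ 1, every morphism A → B[m] in T factors as A → C_{m−1}[1] → C_{m−2}[2] → … → C_1[m−1] → B[m] with all C_j ∈ A. Then T has the factorization property for A (i.e. T has all the Ext groups of the heart A). -/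
open CategoryTheory Category Limits Pretriangulated

namespace Paper

universe v u

variable {C : Type u} [Category.{v} C] [HasZeroObject C] [Preadditive C]
  [HasShift C ℤ] [∀ n : ℤ, (shiftFunctor C n).Additive] [Pretriangulated C]

/-- `FactorsDeg H n f` : the morphism `f : A ⟶ B⟦n⟧` admits a factorization
`A ⟶ C_{n-1}[1] ⟶ C_{n-2}[2] ⟶ … ⟶ C_1[n-1] ⟶ B[n]` with all `C_i ∈ H`. -/
def FactorsDeg (H : Set C) : (n : ℕ) → ∀ {A B : C}, (A ⟶ B⟦(n : ℤ)⟧) → Prop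
  | 0, _, _, _ => True
  | 1, _, _, _ => True
  | (n+2), A, B, f => ∃ (D : C) (_ : D ∈ H) (g : A ⟶ D⟦(1:ℤ)⟧) (h : D ⟶ B⟦((n+1 : ℕ) : ℤ)⟧),
      FactorsDeg H (n+1) h ∧
      f = g ≫ h⟦(1:ℤ)⟧' ≫
        (shiftFunctorAdd' C ((n+1 : ℕ) : ℤ) 1 ((n+2 : ℕ) : ℤ) (by push_cast; ring)).inv.app B

/-- `C` has all the Ext groups of `H` (factorization property). -/
def HasAllExt (H : Set C) : Prop :=
  ∀ (n : ℕ), ∀ A ∈ H, ∀ B ∈ H, ∀ f : A ⟶ B⟦(n : ℤ)⟧, FactorsDeg H n f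

set_option linter.unusedSectionVars false

lemma eq_zero_r {X Y Z : C} {u : X ⟶ Z} {a : X ⟶ Y} {b : Y ⟶ Z} (h : u = a ≫ b) (hb : b = 0) :
    u = 0 := by rw [h, hb, comp_zero]

lemma eq_zero_l {X Y Z : C} {u : X ⟶ Z} {a : X ⟶ Y} {b : Y ⟶ Z} (h : u = a ≫ b) (ha : a = 0) :
    u = 0 := by rw [h, ha, zero_comp]

lemma comp_assoc_zero {X Y Z W : C} {a : X ⟶ Y} {b : Y ⟶ Z} (h : a ≫ b = 0) (c : Z ⟶ W) :
    a ≫ b ≫ c = 0 := by rw [← assoc, h, zero_comp]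

/-- The two-sided orthogonality condition cutting out a heart. -/
def OrthP (N L : Set C) (X : C) : Prop :=
  (∀ Y ∈ N, ∀ f : X ⟶ Y, f = 0) ∧ (∀ Z ∈ L, ∀ f : Z ⟶ X, f = 0)

lemma orthP_ext {N L : Set C} {X Y Z : C} {f : X ⟶ Y} {g : Y ⟶ Z} {h : Z ⟶ X⟦(1 : ℤ)⟧}
    (hT : Triangle.mk f g h ∈ distTriang C) (hX : OrthP N L X) (hZ : OrthP N L Z) :
    OrthP N L Y := by
  refine ⟨fun W hW u => ?_, fun W hW u => ?_⟩
  · obtain ⟨v, hv⟩ := Triangle.yoneda_exact₂ _ hT u (hX.1 W hW _)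
    exact eq_zero_r hv (hZ.1 W hW v)
  · obtain ⟨v, hv⟩ := Triangle.coyoneda_exact₂ _ hT u (hZ.2 W hW _)
    exact eq_zero_l hv (hX.2 W hW v)

lemma zero_of_shift {X Y : C} (n : ℤ) (f : X ⟶ Y) (h : f⟦n⟧' = 0) : f = 0 := by
  apply (shiftFunctor C n).map_injective
  rw [h, Functor.map_zero]

lemma zero_shift {X Y : C} (n : ℤ) (h : ∀ f : X ⟶ Y, f = 0) (g : X⟦n⟧ ⟶ Y⟦n⟧) : g = 0 := by
  obtain ⟨f, rfl⟩ := (shiftFunctor C n).map_surjective g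
  rw [h f, Functor.map_zero]

lemma zero_iso_right {X Y Y' : C} (e : Y ≅ Y') (h : ∀ f : X ⟶ Y', f = 0) (f : X ⟶ Y) :
    f = 0 := by
  rw [← cancel_mono e.hom, zero_comp]; exact h _

lemma zero_iso_left {X X' Y : C} (e : X ≅ X') (h : ∀ f : X' ⟶ Y, f = 0) (f : X ⟶ Y) :
    f = 0 := by
  rw [← cancel_epi e.inv, comp_zero]; exact h _

/-- Vanishing of `Hom(X[1], Y)` gives vanishing of `Hom(X, Y[-1])`. -/
lemma zero_right_neg {X Y : C} (h : ∀ f : X⟦(1 : ℤ)⟧ ⟶ Y, f = 0) (f : X ⟶ Y⟦(-1 : ℤ)⟧) :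
    f = 0 :=
  zero_of_shift 1 f (zero_iso_right (shiftNegShift Y (1 : ℤ)) h _)

lemma zero_left_neg {X Y : C} (h : ∀ f : X ⟶ Y⟦(1 : ℤ)⟧, f = 0) (f : X⟦(-1 : ℤ)⟧ ⟶ Y) :
    f = 0 :=
  zero_of_shift 1 f (zero_iso_left (shiftNegShift X (1 : ℤ)) h _)

lemma zero_left_shift {X Y : C} (h : ∀ f : X ⟶ Y⟦(-1 : ℤ)⟧, f = 0) (f : X⟦(1 : ℤ)⟧ ⟶ Y) :
    f = 0 :=
  zero_iso_right (shiftNegShift Y (1 : ℤ)).symm (zero_shift 1 h) f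

/-- Kernels of composites of epimorphisms of the heart are in the heart. -/
lemma orthP_ker {N L : Set C} (hL : ∀ Z ∈ L, Z⟦(1 : ℤ)⟧ ∈ L)
    {K A' A K' A'' K'' : C} {i : K ⟶ A'} {p : A' ⟶ A} {d : A ⟶ K⟦(1 : ℤ)⟧}
    (hT : Triangle.mk i p d ∈ distTriang C)
    {i' : K' ⟶ A''} {p' : A'' ⟶ A'} {d' : A' ⟶ K'⟦(1 : ℤ)⟧}
    (hT' : Triangle.mk i' p' d' ∈ distTriang C)
    {i'' : K'' ⟶ A''} {d'' : A ⟶ K''⟦(1 : ℤ)⟧}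
    (hT'' : Triangle.mk i'' (p' ≫ p) d'' ∈ distTriang C)
    (hK : OrthP N L K) (hK' : OrthP N L K') (hA'' : OrthP N L A'') (hA : OrthP N L A) :
    OrthP N L K'' := by
  refine ⟨fun W hW u => ?_, fun W hW u => ?_⟩
  · apply zero_of_shift 1
    have hTr := rot_of_distTriang _ hT''
    have hTrr := rot_of_distTriang _ hTr
    -- the composite with the connecting map vanishes
    have key : d'' ≫ u⟦(1 : ℤ)⟧' = 0 := by
      have h0 : p' ≫ (p ≫ d'' ≫ u⟦(1 : ℤ)⟧') = 0 := by
        have h2 : (p' ≫ p) ≫ d'' = 0 := comp_distTriang_mor_zero₂₃ _ hT''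
        rw [← assoc, ← assoc, h2, zero_comp]
      obtain ⟨v, hv⟩ := Triangle.yoneda_exact₃ _ hT' _ h0
      have hv0 : v = 0 := zero_shift 1 (hK'.1 W hW) v
      obtain ⟨w, hw⟩ := Triangle.yoneda_exact₃ _ hT _ (eq_zero_r hv hv0)
      have hw0 : w = 0 := zero_shift 1 (hK.1 W hW) w
      exact eq_zero_r hw (hw0)
    obtain ⟨v, hv⟩ := Triangle.yoneda_exact₃ _ hTr (u⟦(1 : ℤ)⟧') key
    have hv0 : v = 0 := zero_shift 1 (hA''.1 W hW) v
    exact eq_zero_r hv (hv0)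
  · apply zero_of_shift 1
    have h1 : (u⟦(1 : ℤ)⟧') ≫ i''⟦(1 : ℤ)⟧' = 0 := by
      rw [← Functor.map_comp, hA''.2 W hW (u ≫ i''), Functor.map_zero]
    obtain ⟨v, hv⟩ := Triangle.coyoneda_exact₁ _ hT'' (u⟦(1 : ℤ)⟧') h1
    exact eq_zero_l hv (hA.2 _ (hL W hW) v)

/-- `f` factors through a map `A ⟶ K[1]` with `K ∈ H`. -/
def Eff (H : Set C) {A Y : C} (f : A ⟶ Y) : Prop :=
  ∃ (K : C) (_ : K ∈ H) (g : A ⟶ K⟦(1 : ℤ)⟧) (h : K⟦(1 : ℤ)⟧ ⟶ Y), f = g ≫ h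

lemma Eff.comp {H : Set C} {A Y Y' : C} {f : A ⟶ Y} (hf : Eff H f) (g : Y ⟶ Y') :
    Eff H (f ≫ g) := by
  obtain ⟨K, hK, a, b, rfl⟩ := hf
  exact ⟨K, hK, a, b ≫ g, by simp⟩

lemma Eff.precomp {H : Set C} {A Y A' : C} {f : A ⟶ Y} (hf : Eff H f) (g : A' ⟶ A) :
    Eff H (g ≫ f) := by
  obtain ⟨K, hK, a, b, rfl⟩ := hf
  exact ⟨K, hK, g ≫ a, b, by simp⟩

lemma Eff.of_eq_l {H : Set C} {A Y Y' : C} {f : A ⟶ Y} (hf : Eff H f) {g : Y ⟶ Y'}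
    {u : A ⟶ Y'} (h : u = f ≫ g) : Eff H u := by
  rw [h]; exact hf.comp g

lemma Eff.of_eq_r {H : Set C} {A Y A' : C} {f : A ⟶ Y} (hf : Eff H f) {g : A' ⟶ A}
    {u : A' ⟶ Y} (h : u = g ≫ f) : Eff H u := by
  rw [h]; exact hf.precomp g

lemma FactorsDeg.eff {H : Set C} {n : ℕ} {A B : C} {f : A ⟶ B⟦((n + 2 : ℕ) : ℤ)⟧}
    (hf : FactorsDeg H (n + 2) f) : Eff H f := by
  obtain ⟨D, hD, g, h, -, e⟩ := hf
  exact ⟨D, hD, g, _, e⟩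

/-- An effaceable map is killed by an epimorphism. -/
lemma Eff.exists_kill {H : Set C} {A Y : C} {f : A ⟶ Y} (hf : Eff H f) :
    ∃ (K E : C) (_ : K ∈ H) (i : K ⟶ E) (p : E ⟶ A) (d : A ⟶ K⟦(1 : ℤ)⟧),
      Triangle.mk i p d ∈ distTriang C ∧ p ≫ f = 0 := by
  obtain ⟨K, hK, a, b, rfl⟩ := hf
  obtain ⟨E, i, p, hT⟩ := distinguished_cocone_triangle₂ a
  refine ⟨K, E, hK, i, p, a, hT, ?_⟩
  exact comp_assoc_zero (comp_distTriang_mor_zero₂₃ _ hT) b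

lemma eff_of_epi {N L H : Set C} (hL : ∀ Z ∈ L, Z⟦(1 : ℤ)⟧ ∈ L)
    (hH : ∀ X, X ∈ H ↔ OrthP N L X)
    {K A' A Y : C} {i : K ⟶ A'} {p : A' ⟶ A} {d : A ⟶ K⟦(1 : ℤ)⟧}
    (hT : Triangle.mk i p d ∈ distTriang C) (hK : K ∈ H) (hA : A ∈ H)
    {f : A ⟶ Y} (hf : Eff H (p ≫ f)) : Eff H f := by
  have hA' : OrthP N L A' := orthP_ext hT ((hH _).1 hK) ((hH _).1 hA)
  obtain ⟨K', A'', hK', i', p', d', hT', h0⟩ := hf.exists_kill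
  have hA'' : OrthP N L A'' := orthP_ext hT' ((hH _).1 hK') hA'
  obtain ⟨K'', i'', d'', hT''⟩ := distinguished_cocone_triangle₁ (p' ≫ p)
  have hK'' := orthP_ker hL hT hT' hT'' ((hH _).1 hK) ((hH _).1 hK') hA'' ((hH _).1 hA)
  obtain ⟨v, hv⟩ := Triangle.yoneda_exact₃ _ hT'' f ((assoc _ _ _).trans h0)
  exact ⟨K'', (hH _).2 hK'', d'', v, hv⟩

lemma hasAllExt_of_eff {H : Set C}
    (h : ∀ (n : ℕ), ∀ A ∈ H, ∀ B ∈ H, ∀ f : A ⟶ B⟦((n + 1 : ℕ) : ℤ)⟧, Eff H f) :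
    HasAllExt H := by
  intro n
  induction n with
  | zero => intros; trivial
  | succ n ih =>
    cases n with
    | zero => intros; trivial
    | succ n =>
      intro A hA B hB f
      obtain ⟨K, hK, a, b, e⟩ := h (n + 1) A hA B hB f
      let I := (shiftFunctorAdd' C ((n+1 : ℕ) : ℤ) 1 ((n+2 : ℕ) : ℤ) (by push_cast; ring)).app B
      obtain ⟨c, hc⟩ := (shiftFunctor C (1 : ℤ)).map_surjective (b ≫ I.hom)
      refine ⟨K, hK, a, c, ih K hK B hB c, ?_⟩
      rw [hc, e]
      have : I.hom ≫ I.inv = 𝟙 _ := I.hom_inv_id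
      change a ≫ b = a ≫ (b ≫ I.hom) ≫ I.inv
      rw [assoc, this, comp_id]

/-- The last step of a factorization. -/
lemma FactorsDeg.last {H : Set C} (n : ℕ) : ∀ {A B : C} (_ : A ∈ H)
    (f : A ⟶ B⟦((n + 1 : ℕ) : ℤ)⟧), FactorsDeg H (n + 1) f →
    ∃ (D : C) (_ : D ∈ H) (k : D ⟶ B⟦(1 : ℤ)⟧), ∀ (B' : C) (w : B ⟶ B'),
      k ≫ w⟦(1 : ℤ)⟧' = 0 → f ≫ w⟦((n + 1 : ℕ) : ℤ)⟧' = 0 := by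
  induction n with
  | zero => intro A B hA f _; exact ⟨A, hA, f, fun B' w h => h⟩
  | succ n ih =>
    rintro A B hA f ⟨D, hD, g, h, hh, rfl⟩
    obtain ⟨E, hE, k, hk⟩ := ih hD h hh
    refine ⟨E, hE, k, fun B' w hw => ?_⟩
    have h1 := hk B' w hw
    have nat := (shiftFunctorAdd' C ((n+1 : ℕ) : ℤ) 1 ((n+2 : ℕ) : ℤ)
      (by push_cast; ring)).inv.naturality w
    dsimp only [Functor.comp_map] at nat
    rw [assoc, assoc]
    erw [← nat]
    rw [← assoc (h⟦(1 : ℤ)⟧'), ← Functor.map_comp, h1]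
    simp

lemma mem_le {S le : Set C} (h : IsTStructureOn S le) {Z : C} (hZ : Z ∈ S)
    (h0 : ∀ B ∈ S ∩ rOrth le, ∀ f : Z ⟶ B, f = 0) : Z ∈ le := by
  obtain ⟨A, B, hA, hB, f, g, d, hT⟩ := h.exists_triangle Z hZ
  obtain ⟨r, hr⟩ := Triangle.yoneda_exact₃ _ hT (𝟙 B) (h0 B hB _)
  have hr0 : r = 0 := hB.2 _ (h.shift A hA) r
  have hB0 : IsZero B := by
    rw [IsZero.iff_id_eq_zero]
    exact eq_zero_r hr hr0
  have : IsIso f := (Triangle.isZero₃_iff_isIso₁ _ hT).1 hB0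
  exact h.isoClosed (asIso f) hA

lemma mem_heart {S le : Set C} (hS : IsTriangulatedSub S) (h : IsTStructureOn S le) {Z : C}
    (hZ : Z ∈ S) (h0 : ∀ B ∈ S ∩ rOrth le, ∀ f : Z ⟶ B, f = 0)
    (h1 : ∀ W ∈ le, ∀ f : W⟦(1 : ℤ)⟧ ⟶ Z, f = 0) : Z ∈ heartOn S le := by
  refine ⟨⟨Z, mem_le h hZ h0, ⟨?_⟩⟩, ⟨Z⟦(-1 : ℤ)⟧, ⟨hS.shift _ _ hZ, ?_⟩, ⟨?_⟩⟩⟩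
  · exact ((shiftFunctorZero' C (-0 : ℤ) (by simp)).app Z).symm
  · intro W hW f
    exact zero_right_neg (h1 W hW) f
  · exact (shiftNegShift Z (1 : ℤ)).symm

lemma heart_le {S le : Set C} (h : IsTStructureOn S le) {Z : C} (hZ : Z ∈ heartOn S le) :
    Z ∈ le := by
  obtain ⟨⟨Y, hY, ⟨e⟩⟩, -⟩ := hZ
  exact h.isoClosed (e ≪≫ (shiftFunctorZero' C (-0 : ℤ) (by simp)).app Y).symm hY

lemma heart_ge {S le : Set C} {Z : C} (hZ : Z ∈ heartOn S le) :
    ∃ Y ∈ S ∩ rOrth le, Nonempty (Z ≅ Y⟦(1 : ℤ)⟧) := hZ.2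

lemma coaisle_neg {S le : Set C} (hS : IsTriangulatedSub S) (h : IsTStructureOn S le) {Y : C}
    (hY : Y ∈ S ∩ rOrth le) : Y⟦(-1 : ℤ)⟧ ∈ S ∩ rOrth le :=
  ⟨hS.shift _ _ hY.1, fun W hW f => zero_right_neg (hY.2 _ (h.shift W hW)) f⟩

section Glue

variable {S₁ S₂ le₁ le₂ : Set C}

/-- Test objects on the right: generators of the glued `T^{≥ 1}`. -/
def testN (S₁ S₂ le₁ le₂ : Set C) : Set C :=
  {Y | Y ∈ S₂ ∩ rOrth le₂ ∨ (Y ∈ S₁ ∧ ∀ W ∈ le₁, ∀ f : W⟦(1 : ℤ)⟧ ⟶ Y, f = 0)}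

/-- Test objects on the left: generators of the glued `T^{≤ -1}`. -/
def testL (le₁ le₂ : Set C) : Set C :=
  {Z | (∃ W ∈ le₂, Z = W⟦(1 : ℤ)⟧) ∨ (∃ W ∈ le₁, Z = W⟦(1 : ℤ)⟧⟦(1 : ℤ)⟧)}

lemma testL_shift (h₁ : IsTStructureOn S₁ le₁) (h₂ : IsTStructureOn S₂ le₂) :
    ∀ Z ∈ testL le₁ le₂, Z⟦(1 : ℤ)⟧ ∈ testL le₁ le₂ := by
  rintro Z (⟨W, hW, rfl⟩ | ⟨W, hW, rfl⟩)
  · exact Or.inl ⟨_, h₂.shift _ hW, rfl⟩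
  · exact Or.inr ⟨_, h₁.shift _ hW, rfl⟩

lemma mem_sh_heart (hS : IsTriangulatedSub S₁) (h₁ : IsTStructureOn S₁ le₁) {X : C}
    (hX : X ∈ S₁)
    (h0 : ∀ Y ∈ S₁, (∀ W ∈ le₁, ∀ f : W⟦(1 : ℤ)⟧ ⟶ Y, f = 0) → ∀ f : X ⟶ Y, f = 0)
    (h1 : ∀ W ∈ le₁, ∀ f : W⟦(1 : ℤ)⟧⟦(1 : ℤ)⟧ ⟶ X, f = 0) :
    X ∈ shSet (heartOn S₁ le₁) 1 := by
  refine ⟨X⟦(-1 : ℤ)⟧, mem_heart hS h₁ (hS.shift _ _ hX) ?_ ?_,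
    ⟨(shiftNegShift X (1 : ℤ)).symm⟩⟩
  · intro B hB
    exact zero_left_neg (h0 _ (hS.shift _ _ hB.1) fun W hW => zero_shift 1 (hB.2 W hW))
  · intro W hW
    exact zero_right_neg (h1 W hW)

lemma sh_heart_sub (hS : IsTriangulatedSub S₁) (h₁ : IsTStructureOn S₁ le₁) {X : C}
    (hX : X ∈ shSet (heartOn S₁ le₁) 1) : X ∈ S₁ := by
  obtain ⟨Z, hZ, ⟨e⟩⟩ := hX
  exact hS.isoClosed e.symm (hS.shift _ _ (h₁.subset (heart_le h₁ hZ)))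

lemma sh_heart_orthP (hSOD : IsSOD S₁ S₂) (h₁ : IsTStructureOn S₁ le₁)
    (h₂ : IsTStructureOn S₂ le₂) (hcomp : Compatible S₂ le₁ le₂) {X : C}
    (hX : X ∈ shSet (heartOn S₁ le₁) 1) : OrthP (testN S₁ S₂ le₁ le₂) (testL le₁ le₂) X := by
  have hXS := sh_heart_sub hSOD.sub₁ h₁ hX
  obtain ⟨Z, hZ, ⟨e⟩⟩ := hX
  obtain ⟨V, hV, ⟨e'⟩⟩ := heart_ge hZ
  constructor
  · rintro Y (hY | ⟨hY, hY'⟩)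
    · exact zero_iso_left e (zero_left_shift
        (hcomp Z (heart_le h₁ hZ) _ (coaisle_neg hSOD.sub₂ h₂ hY)))
    · exact zero_iso_left e (hY' Z (heart_le h₁ hZ))
  · rintro Y (⟨W, hW, rfl⟩ | ⟨W, hW, rfl⟩)
    · exact hSOD.orth _ (hSOD.sub₂.shift _ _ (h₂.subset hW)) _ hXS
    · exact zero_iso_right e (zero_shift 1 (zero_iso_right e' (zero_shift 1 (hV.2 W hW))))

lemma heart_orthP (hSOD : IsSOD S₁ S₂)
    (h₂ : IsTStructureOn S₂ le₂) (hcomp : Compatible S₂ le₁ le₂) {X : C}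
    (hX : X ∈ heartOn S₂ le₂) : OrthP (testN S₁ S₂ le₁ le₂) (testL le₁ le₂) X := by
  have hle := heart_le h₂ hX
  obtain ⟨V, hV, ⟨e⟩⟩ := heart_ge hX
  constructor
  · rintro Y (hY | ⟨hY, hY'⟩)
    · exact hY.2 _ hle
    · exact hSOD.orth _ (h₂.subset hle) _ hY
  · rintro Y (⟨W, hW, rfl⟩ | ⟨W, hW, rfl⟩)
    · exact zero_iso_right e (zero_shift 1 (hV.2 W hW))
    · exact zero_iso_right e (zero_shift 1 (zero_left_shift
        (hcomp W hW _ (coaisle_neg hSOD.sub₂ h₂ hV))))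

lemma star_iff (hSOD : IsSOD S₁ S₂) (h₁ : IsTStructureOn S₁ le₁)
    (h₂ : IsTStructureOn S₂ le₂) (hcomp : Compatible S₂ le₁ le₂) (X : C) :
    X ∈ star (heartOn S₂ le₂) (shSet (heartOn S₁ le₁) 1) ↔
      OrthP (testN S₁ S₂ le₁ le₂) (testL le₁ le₂) X := by
  constructor
  · rintro ⟨A, hA, B, hB, f, g, h, hT⟩
    exact orthP_ext hT (heart_orthP hSOD h₂ hcomp hA) (sh_heart_orthP hSOD h₁ h₂ hcomp hB)
  · intro hX
    obtain ⟨A, B, hA, hB, f, g, h, hT⟩ := hSOD.exists_triangle X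
    -- maps from `B` to `S₁`
    have hB1 : ∀ Y ∈ S₁, (∀ W ∈ le₁, ∀ f : W⟦(1 : ℤ)⟧ ⟶ Y, f = 0) → ∀ f : B ⟶ Y, f = 0 := by
      intro Y hY hY' u
      obtain ⟨v, hv⟩ := Triangle.yoneda_exact₃ _ hT u (hX.1 Y (Or.inr ⟨hY, hY'⟩) _)
      have hv0 : v = 0 := hSOD.orth _ (hSOD.sub₂.shift _ _ hA) _ hY v
      exact eq_zero_r hv (hv0)
    have hBle : B⟦(-1 : ℤ)⟧ ∈ le₁ := by
      refine mem_le h₁ (hSOD.sub₁.shift _ _ hB) fun V hV => zero_left_neg ?_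
      exact hB1 _ (hSOD.sub₁.shift _ _ hV.1) fun W hW => zero_shift 1 (hV.2 W hW)
    have hAh : A ∈ heartOn S₂ le₂ := by
      refine mem_heart hSOD.sub₂ h₂ hA ?_ ?_
      · intro V hV u
        obtain ⟨v, hv⟩ := Triangle.yoneda_exact₂ _ (inv_rot_of_distTriang _ hT) u
          (hcomp _ hBle V hV _)
        have hv0 : v = 0 := hX.1 V (Or.inl hV) v
        exact eq_zero_r hv (hv0)
      · intro W hW u
        have hu : u ≫ f = 0 := hX.2 _ (Or.inl ⟨W, hW, rfl⟩) _
        obtain ⟨v, hv⟩ := Triangle.coyoneda_exact₂ _ (inv_rot_of_distTriang _ hT) u hu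
        have hv0 : v = 0 := hSOD.orth _ (hSOD.sub₂.shift _ _ (h₂.subset hW)) _
          (hSOD.sub₁.shift _ _ hB) v
        exact eq_zero_l hv (hv0)
    refine ⟨A, hAh, B, mem_sh_heart hSOD.sub₁ h₁ hB hB1 ?_, f, g, h, hT⟩
    intro W hW u
    obtain ⟨V, hV, ⟨e⟩⟩ := heart_ge hAh
    have hu : u ≫ h = 0 := zero_shift 1 (zero_iso_right e (zero_shift 1 (hcomp W hW V hV))) _
    obtain ⟨v, hv⟩ := Triangle.coyoneda_exact₃ _ hT u hu
    have hv0 : v = 0 := hX.2 _ (Or.inr ⟨W, hW, rfl⟩) v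
    exact eq_zero_l hv (hv0)

/-- Effaceability between objects of `A₁[1]`, inside `A₁[1]`. -/
lemma eff_sh (hext₁ : HasAllExt (heartOn S₁ le₁)) (n : ℕ) {A B : C}
    (hA : A ∈ shSet (heartOn S₁ le₁) 1) (hB : B ∈ shSet (heartOn S₁ le₁) 1)
    (f : A ⟶ B⟦((n + 2 : ℕ) : ℤ)⟧) : Eff (shSet (heartOn S₁ le₁) 1) f := by
  obtain ⟨X, hX, ⟨e⟩⟩ := hA
  obtain ⟨Z, hZ, ⟨e'⟩⟩ := hB
  let J : B⟦((n + 2 : ℕ) : ℤ)⟧ ≅ Z⟦((n + 2 : ℕ) : ℤ)⟧⟦(1 : ℤ)⟧ :=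
    (shiftFunctor C _).mapIso e' ≪≫ shiftComm Z (1 : ℤ) ((n + 2 : ℕ) : ℤ)
  obtain ⟨φ, hφ⟩ := (shiftFunctor C (1 : ℤ)).map_surjective (e.inv ≫ f ≫ J.hom)
  obtain ⟨K, hK, a, b, hab⟩ := (hext₁ (n + 2) X hX Z hZ φ).eff
  refine ⟨K⟦(1 : ℤ)⟧, ⟨K, hK, ⟨Iso.refl _⟩⟩, e.hom ≫ a⟦(1 : ℤ)⟧', b⟦(1 : ℤ)⟧' ≫ J.inv, ?_⟩
  have : f = e.hom ≫ (e.inv ≫ f ≫ J.hom) ≫ J.inv := by simp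
  rw [this, ← hφ, hab]
  simp

lemma shift_dist {X Y Z : C} {f : X ⟶ Y} {g : Y ⟶ Z} {h : Z ⟶ X⟦(1 : ℤ)⟧}
    (hT : Triangle.mk f g h ∈ distTriang C) (n : ℤ) {W : C} (u : W ⟶ Y⟦n⟧)
    (hu : u ≫ g⟦n⟧' = 0) : ∃ v : W ⟶ X⟦n⟧, u = v ≫ f⟦n⟧' := by
  have hz : u ≫ (n.negOnePow • g⟦n⟧') = 0 := by
    rw [Units.smul_def, Preadditive.comp_zsmul, hu, smul_zero]
  obtain ⟨v, hv⟩ := Triangle.coyoneda_exact₂ _ (Triangle.shift_distinguished _ hT n) u hz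
  change W ⟶ X⟦n⟧ at v
  have hv' : u = v ≫ (n.negOnePow • f⟦n⟧') := hv
  refine ⟨n.negOnePow • v, ?_⟩
  rw [hv', Units.smul_def, Units.smul_def, Preadditive.comp_zsmul, Preadditive.zsmul_comp]

end Glue

/-- Corollary A.8: under the gluing setup, if each `T_i` has the
factorization property for its heart `A_i`, and morphisms from objects of `A₁[1]` to
shifts of objects of `A₂` factor through chains in the glued heart `A`, then `C` has
the factorization property (all the Ext groups) for the glued heart `A = A₂ * A₁[1]`. -/
theorem glued_hasAllExt {C : Type u} [Category.{v} C] [HasZeroObject C] [Preadditive C]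
    [HasShift C ℤ] [∀ n : ℤ, (shiftFunctor C n).Additive] [Pretriangulated C]
    (S₁ S₂ le₁ le₂ : Set C) (hSOD : IsSOD S₁ S₂)
    (h₁ : IsTStructureOn S₁ le₁) (h₂ : IsTStructureOn S₂ le₂)
    (hcomp : Compatible S₂ le₁ le₂)
    (hext₁ : HasAllExt (heartOn S₁ le₁)) (hext₂ : HasAllExt (heartOn S₂ le₂))
    (hrel : ∀ A ∈ shSet (heartOn S₁ le₁) 1, ∀ B ∈ heartOn S₂ le₂, ∀ (m : ℕ),
      1 ≤ m → ∀ f : A ⟶ B⟦(m : ℤ)⟧,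
        FactorsDeg (star (heartOn S₂ le₂) (shSet (heartOn S₁ le₁) 1)) m f) :
    HasAllExt (star (heartOn S₂ le₂) (shSet (heartOn S₁ le₁) 1)) := by
  have hL := testL_shift h₁ h₂
  have hH := star_iff hSOD h₁ h₂ hcomp
  set H := star (heartOn S₂ le₂) (shSet (heartOn S₁ le₁) 1) with hHdef
  have in₁ : ∀ X ∈ shSet (heartOn S₁ le₁) 1, X ∈ H := fun X hX =>
    (hH X).2 (sh_heart_orthP hSOD h₁ h₂ hcomp hX)
  have in₂ : ∀ X ∈ heartOn S₂ le₂, X ∈ H := fun X hX =>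
    (hH X).2 (heart_orthP hSOD h₂ hcomp hX)
  apply hasAllExt_of_eff
  intro n
  induction n with
  | zero => intro A hA B hB f; exact ⟨B, hB, f, 𝟙 _, (comp_id _).symm⟩
  | succ n ih =>
    -- source in `A₁[1]`
    have step : ∀ A ∈ shSet (heartOn S₁ le₁) 1, ∀ B ∈ H,
        ∀ f : A ⟶ B⟦((n + 2 : ℕ) : ℤ)⟧, Eff H f := by
      intro A hA B hB f
      obtain ⟨B₂, hB₂, B₁, hB₁, i, p, d, hT⟩ := hB
      obtain ⟨K, E, hK, j, q, c, hT', h0⟩ :=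
        (eff_sh hext₁ n hA hB₁ (f ≫ p⟦((n + 2 : ℕ) : ℤ)⟧')).exists_kill
      have hEP := orthP_ext hT' (sh_heart_orthP hSOD h₁ h₂ hcomp hK)
        (sh_heart_orthP hSOD h₁ h₂ hcomp hA)
      have hES : E ∈ S₁ := hSOD.sub₁.ext₂ _ hT' (sh_heart_sub hSOD.sub₁ h₁ hK)
        (sh_heart_sub hSOD.sub₁ h₁ hA)
      have hE : E ∈ shSet (heartOn S₁ le₁) 1 := mem_sh_heart hSOD.sub₁ h₁ hES
        (fun Y hY hY' => hEP.1 Y (Or.inr ⟨hY, hY'⟩))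
        (fun W hW => hEP.2 _ (Or.inr ⟨W, hW, rfl⟩))
      refine eff_of_epi hL hH hT' (in₁ _ hK) (in₁ _ hA) ?_
      obtain ⟨v, hv⟩ := shift_dist hT _ (q ≫ f) (by rw [assoc]; exact h0)
      rw [hv]
      exact (hrel E hE B₂ hB₂ (n + 2) (by omega) v).eff.comp _
    intro A hA B hB f
    change A ⟶ B⟦((n + 2 : ℕ) : ℤ)⟧ at f
    have hA0 := hA
    have hB0 := hB
    obtain ⟨A₂, hA₂, A₁, hA₁, iA, pA, dA, hTA⟩ := hA0
    obtain ⟨B₂, hB₂, B₁, hB₁, iB, pB, dB, hTB⟩ := hB0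
    obtain ⟨u, hu⟩ := shift_dist hTB ((n + 2 : ℕ) : ℤ) (iA ≫ f)
      (hSOD.orth _ (h₂.subset (heart_le h₂ hA₂)) _
        (hSOD.sub₁.shift _ _ (sh_heart_sub hSOD.sub₁ h₁ hB₁)) _)
    obtain ⟨D, hD, k, hk⟩ := FactorsDeg.last (n + 1) hA₂ u (hext₂ _ A₂ hA₂ B₂ hB₂ u)
    obtain ⟨B', w, r, hTB'⟩ := distinguished_cocone_triangle₂ (k ≫ iB⟦(1 : ℤ)⟧')
    have hB' : B' ∈ H := (hH _).2 (orthP_ext hTB' ((hH _).1 hB) ((hH _).1 (in₂ _ hD)))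
    have hkw : k ≫ (iB ≫ w)⟦(1 : ℤ)⟧' = 0 := by
      rw [Functor.map_comp, ← assoc]
      exact comp_distTriang_mor_zero₃₁ _ hTB'
    have h0 := hk B' (iB ≫ w) hkw
    have h0' : iA ≫ f ≫ w⟦((n + 2 : ℕ) : ℤ)⟧' = 0 := by
      rw [← assoc, hu, assoc, ← Functor.map_comp]
      exact h0
    obtain ⟨g, hg⟩ := Triangle.yoneda_exact₂ _ hTA (f ≫ w⟦((n + 2 : ℕ) : ℤ)⟧') h0'
    have hgE : Eff H (f ≫ w⟦((n + 2 : ℕ) : ℤ)⟧') :=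
      (step A₁ hA₁ B' hB' g).of_eq_r hg
    obtain ⟨K, E, hK, j, q, c, hT', hq⟩ := hgE.exists_kill
    have hE : E ∈ H := (hH _).2 (orthP_ext hT' ((hH _).1 hK) ((hH _).1 hA))
    refine eff_of_epi hL hH hT' hK hA ?_
    obtain ⟨v, hv⟩ := shift_dist (inv_rot_of_distTriang _ hTB') ((n + 2 : ℕ) : ℤ) (q ≫ f)
      ((assoc _ _ _).trans hq)
    refine Eff.of_eq_l ?_ hv
    change E ⟶ D⟦(-1 : ℤ)⟧⟦((n + 2 : ℕ) : ℤ)⟧ at v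
    let I : D⟦((n + 1 : ℕ) : ℤ)⟧ ≅ D⟦(-1 : ℤ)⟧⟦((n + 2 : ℕ) : ℤ)⟧ :=
      (shiftFunctorAdd' C (-1 : ℤ) ((n + 2 : ℕ) : ℤ) ((n + 1 : ℕ) : ℤ)
        (by push_cast; ring)).app D
    have hI : v = (v ≫ I.inv) ≫ I.hom := by simp
    have := (ih E hE D (in₂ _ hD) (v ≫ I.inv)).comp I.hom
    rwa [← hI] at this

end Paper
end
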